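/- arXiv:1805.09395 — 2 statements merged into one kernel-verified Lean document; each statement's English description precedes it below -/
import Mathlib

section
/- Let ℓ ≥ 3 be an odd integer and let ζ ∈ ℂ be a primitive ℓ-th root of unity. Then in ℂ[X] one has the factorization Q = (X − 2) · ∏_{j=1}^{(ℓ−1)/2} (X − ζ^j − ζ^{−j})². -/
open Polynomial

/-- The Chebyshev polynomials of the second kind `P j`, defined by
`P 0 = 0`, `P 1 = 1`, `P (j+2) = X * P (j+1) - P j`. -/
noncomputable def chebP (R : Type*) [CommRing R] : ℕ → Polynomial R
  | 0 => 0
  | 1 => 1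
  | (j + 2) => X * chebP R (j + 1) - chebP R j

/-- The polynomial `Q = X * P ℓ - 2 * P (ℓ-1) - 2`. -/
noncomputable def chebQ (R : Type*) [CommRing R] (ℓ : ℕ) : Polynomial R :=
  X * chebP R ℓ - 2 * chebP R (ℓ - 1) - 2

/-!
In terms of the rescaled Chebyshev polynomials of the first kind, `Q = C_ℓ - 2`, so substituting
`X = t + t⁻¹` turns `Q` into `t ^ ℓ + t⁻¹ ^ ℓ - 2 = t⁻¹ ^ ℓ * (t ^ ℓ - 1) ^ 2`. Factoring one copy
of `t ^ ℓ - 1` along the powers of `ζ`, the other along the powers of `ζ⁻¹`, and using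
`t⁻¹ * (t - z) * (t - z⁻¹) = t + t⁻¹ - (z + z⁻¹)` shows that
`Q = ∏_{k < ℓ} (X - (ζ ^ k + ζ⁻¹ ^ k))`, since `t + t⁻¹` is transcendental for an indeterminate `t`.
The factors for `k` and `ℓ - k` coincide, which for odd `ℓ` leaves `k = 0` alone and pairs up all
the others.
-/

open Finset

theorem chebP_eq_chebyshev_S (R : Type*) [CommRing R] :
    ∀ n : ℕ, chebP R n = Chebyshev.S R (n - 1)
  | 0 => by simp [chebP]
  | 1 => by simp [chebP]
  | n + 2 => by
    rw [chebP, chebP_eq_chebyshev_S R (n + 1), chebP_eq_chebyshev_S R n,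
      show ((n + 2 : ℕ) : ℤ) - 1 = n - 1 + 2 by push_cast; ring, Chebyshev.S_add_two,
      show ((n + 1 : ℕ) : ℤ) - 1 = n - 1 + 1 by push_cast; ring]

theorem chebQ_eq_chebyshev_C_sub_two (R : Type*) [CommRing R] {n : ℕ} (hn : 0 < n) :
    chebQ R n = Chebyshev.C R n - 2 := by
  rw [chebQ, chebP_eq_chebyshev_S, chebP_eq_chebyshev_S, Chebyshev.C_eq_S_sub_X_mul_S,
    Chebyshev.S_eq R n, Nat.cast_pred hn, show (n : ℤ) - 1 - 1 = n - 2 by ring]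
  ring

theorem eval_chebyshev_C_add_of_mul_eq_one {R : Type*} [CommRing R] {x y : R} (h : x * y = 1)
    (n : ℕ) : (Chebyshev.C R n).eval (x + y) = x ^ n + y ^ n := by
  rw [← dickson_one_one_eq_chebyshev_C, dickson_one_one_eval_add_inv x y h]

theorem transcendental_ratFunc_X_add_inv (K : Type*) [Field K] :
    Transcendental K (RatFunc.X + RatFunc.X⁻¹ : RatFunc K) := by
  refine RatFunc.transcendental_of_ne_C _ ?_
  rintro ⟨c, hc⟩
  refine RatFunc.transcendental_X (K := K) ⟨X ^ 2 - C c * X + 1, ?_, ?_⟩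
  · intro h
    simpa using congrArg (coeff · 0) h
  · have hX : (RatFunc.X : RatFunc K) ≠ 0 := RatFunc.X_ne_zero
    simp only [map_add, map_sub, map_mul, map_pow, map_one, aeval_X, aeval_C,
      RatFunc.algebraMap_eq_C, ← hc]
    field_simp
    ring

theorem pow_sub_one_eq_prod_range_sub_pow {R : Type*} [CommRing R] [IsDomain R] {ζ : R} {n : ℕ}
    (hζ : IsPrimitiveRoot ζ n) (hn : 0 < n) (t : R) :
    t ^ n - 1 = ∏ k ∈ range n, (t - ζ ^ k) := by
  simpa [eval_prod] using congrArg (eval t) (X_pow_sub_C_eq_prod hζ hn (one_pow n))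

section PrimitiveRoot

variable {K : Type*} [Field K] {ζ : K} {n : ℕ}

theorem prod_range_add_inv_sub_pow_add_inv_pow (hζ : IsPrimitiveRoot ζ n) (hn : 0 < n) {t : K}
    (ht : t ≠ 0) :
    ∏ k ∈ range n, (t + t⁻¹ - (ζ ^ k + ζ⁻¹ ^ k)) = t ^ n + t⁻¹ ^ n - 2 := by
  have hζ₀ : ζ ≠ 0 := hζ.ne_zero hn.ne'
  have factor (k : ℕ) :
      t + t⁻¹ - (ζ ^ k + ζ⁻¹ ^ k) = t⁻¹ * ((t - ζ ^ k) * (t - ζ⁻¹ ^ k)) := by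
    rw [inv_pow]
    field_simp
    ring
  calc ∏ k ∈ range n, (t + t⁻¹ - (ζ ^ k + ζ⁻¹ ^ k))
      = t⁻¹ ^ n * ((t ^ n - 1) * (t ^ n - 1)) := by
        simp only [factor, prod_mul_distrib, prod_const, card_range,
          ← pow_sub_one_eq_prod_range_sub_pow hζ hn, ← pow_sub_one_eq_prod_range_sub_pow hζ.inv hn]
    _ = t ^ n + t⁻¹ ^ n - 2 := by
        rw [inv_pow]
        field_simp
        ring

theorem chebQ_eq_prod_range (hζ : IsPrimitiveRoot ζ n) (hn : 0 < n) :
    chebQ K n = ∏ k ∈ range n, (X - C (ζ ^ k + ζ⁻¹ ^ k)) := by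
  have hX : (RatFunc.X : RatFunc K) ≠ 0 := RatFunc.X_ne_zero
  have hζ' : IsPrimitiveRoot (algebraMap K (RatFunc K) ζ) n :=
    hζ.map_of_injective (algebraMap K (RatFunc K)).injective
  apply transcendental_iff_injective.1 (transcendental_ratFunc_X_add_inv K)
  calc aeval (RatFunc.X + RatFunc.X⁻¹ : RatFunc K) (chebQ K n)
      = RatFunc.X ^ n + RatFunc.X⁻¹ ^ n - 2 := by
        rw [chebQ_eq_chebyshev_C_sub_two K hn, map_sub, Chebyshev.aeval_C, map_ofNat,
          eval_chebyshev_C_add_of_mul_eq_one (mul_inv_cancel₀ hX)]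
    _ = aeval (RatFunc.X + RatFunc.X⁻¹) (∏ k ∈ range n, (X - C (ζ ^ k + ζ⁻¹ ^ k))) := by
        simp only [← prod_range_add_inv_sub_pow_add_inv_pow hζ' hn hX, map_prod, map_sub,
          aeval_X, aeval_C, map_add, map_pow, map_inv₀]

theorem pow_sub_add_inv_pow_sub_eq (hζ : ζ ^ n = 1) {k : ℕ} (hk : k ≤ n) :
    ζ ^ (n - k) + ζ⁻¹ ^ (n - k) = ζ ^ k + ζ⁻¹ ^ k := by
  obtain ⟨j, rfl⟩ := Nat.exists_eq_add_of_le hk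
  have hj : ζ ^ j = (ζ ^ k)⁻¹ := eq_inv_of_mul_eq_one_right (by rw [← pow_add, hζ])
  rw [Nat.add_sub_cancel_left, inv_pow, inv_pow, hj, inv_inv, add_comm]

end PrimitiveRoot

theorem prod_range_two_mul_add_one {M : Type*} [CommMonoid M] (f : ℕ → M) (m : ℕ) :
    ∏ k ∈ range (2 * m + 1), f k = f 0 * ∏ j ∈ Icc 1 m, f j * f (2 * m + 1 - j) := by
  have upper_half :
      ∏ j ∈ Ico 1 (m + 1), f (2 * m + 1 - j) = ∏ j ∈ Ico (m + 1) (2 * m + 1), f j := by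
    rw [prod_Ico_reflect f 1 (by lia)]
    congr 2
    lia
  rw [prod_range_eq_mul_Ico f (by lia), ← Ico_add_one_right_eq_Icc, prod_mul_distrib, upper_half,
    prod_Ico_consecutive f (by lia) (by lia)]

theorem stmt_4_general {K : Type*} [Field K] {ℓ : ℕ} (hodd : Odd ℓ) {ζ : K}
    (hζ : IsPrimitiveRoot ζ ℓ) :
    chebQ K ℓ =
      (X - C 2) * ∏ j ∈ Icc 1 ((ℓ - 1) / 2), (X - C (ζ ^ j + ζ⁻¹ ^ j)) ^ 2 := by
  obtain ⟨m, rfl⟩ := hodd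
  have hm : (2 * m + 1 - 1) / 2 = m := by lia
  rw [chebQ_eq_prod_range hζ (by lia), prod_range_two_mul_add_one, hm, pow_zero, pow_zero,
    one_add_one_eq_two]
  congr 1
  refine prod_congr rfl fun j hj ↦ ?_
  have hj : j ≤ 2 * m + 1 := by
    have := (mem_Icc.1 hj).2
    lia
  rw [pow_sub_add_inv_pow_sub_eq hζ.pow_eq_one hj, sq]

theorem stmt_4 (ℓ : ℕ) (hodd : Odd ℓ) (hℓ : 3 ≤ ℓ) (ζ : ℂ)
    (hζ : IsPrimitiveRoot ζ ℓ) :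
    chebQ ℂ ℓ =
      (X - C 2) * ∏ j ∈ Finset.Icc 1 ((ℓ - 1) / 2), (X - C (ζ ^ j + ζ⁻¹ ^ j)) ^ 2 := by
  exact stmt_4_general hodd hζ
end

section
/- Let ℓ ≥ 3 be an odd integer and let ζ ∈ ℂ be a primitive ℓ-th root of unity. Then the complex numbers ζ^j + ζ^{−j} for j = 0, 1, …, (ℓ−1)/2 are pairwise distinct; moreover, viewing Q as a polynomial over ℂ, the root 2 = ζ^0 + ζ^{−0} of Q has multiplicity 1, and for each 1 ≤ j ≤ (ℓ−1)/2 the root ζ^j + ζ^{−j} of Q has multiplicity 2. -/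
open Polynomial

/-!
In terms of the Vieta–Lucas polynomials `C n`, characterised by `C n (z + z⁻¹) = z ^ n + z⁻¹ ^ n`,
one has `Q = C ℓ - 2`. For `ℓ = 2 * m + 1` this factors as `(X - 2) * W m ^ 2`, where
`W m (z + z⁻¹) = (z ^ (m + 1) - z⁻¹ ^ m) / (z - 1)` is a polynomial of degree `m`. It vanishes at
the `m` distinct points `ζ ^ j + ζ⁻¹ ^ j`, `1 ≤ j ≤ m`, so these are its roots and all are simple.
-/

section CommRing

variable (R : Type*) [CommRing R]

theorem chebP_eq_S (n : ℕ) : chebP R n = Chebyshev.S R (n - 1) := by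
  induction n using Nat.twoStepInduction with
  | zero => simp [chebP]
  | one => simp [chebP]
  | more n ih_n ih_succ =>
    rw [chebP, ih_n, ih_succ, Chebyshev.S_eq R (((n + 2 : ℕ) : ℤ) - 1)]
    push_cast
    ring_nf

theorem chebQ_succ (n : ℕ) : chebQ R (n + 1) = Chebyshev.C R (n + 1) - 2 := by
  have C_eq := Chebyshev.C_eq_S_sub_X_mul_S R (n + 1)
  have S_succ := Chebyshev.S_add_one R n
  rw [add_sub_cancel_right] at C_eq
  rw [chebQ, Nat.add_sub_cancel, chebP_eq_S, chebP_eq_S, Nat.cast_succ, add_sub_cancel_right]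
  linear_combination -C_eq - 2 * S_succ

/-- The Chebyshev polynomials of the fourth kind, rescaled to be monic with integer coefficients:
`W n (2 cos θ) = sin ((n + 1/2) θ) / sin (θ / 2)`. They are the square roots of `chebQ` at odd
indices, up to the factor `X - 2`. As for Mathlib's `Chebyshev.S`, the index is an integer. -/
noncomputable def chebW (n : ℤ) : R[X] := Chebyshev.S R n + Chebyshev.S R (n - 1)

@[simp]
theorem chebW_zero : chebW R 0 = 1 := by simp [chebW]

@[simp]
theorem chebW_one : chebW R 1 = X + 1 := by simp [chebW]

theorem chebW_add_two (n : ℤ) : chebW R (n + 2) = X * chebW R (n + 1) - chebW R n := by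
  have S_succ := Chebyshev.S_add_one R n
  have S_add_two := Chebyshev.S_add_two R n
  rw [chebW, chebW, chebW, add_sub_cancel_right, show n + 2 - 1 = n + 1 by ring]
  linear_combination S_add_two + S_succ

theorem C_sub_two_eq_mul_chebW_sq (n : ℤ) :
    Chebyshev.C R (2 * n + 1) - 2 = (X - 2) * chebW R n ^ 2 := by
  have C_product : Chebyshev.C R (n + 1) * Chebyshev.C R n = Chebyshev.C R (2 * n + 1) + X := by
    rw [Chebyshev.C_mul_C, add_sub_cancel_left, Chebyshev.C_one]
    ring_nf
  have C_n := Chebyshev.C_eq_S_sub_X_mul_S R n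
  have C_succ := Chebyshev.C_eq_S_sub_X_mul_S R (n + 1)
  have cassini := Chebyshev.S_sq_add_S_sq R (n - 1)
  rw [add_sub_cancel_right, Chebyshev.S_add_one] at C_succ
  rw [sub_add_cancel] at cassini
  rw [C_n, C_succ] at C_product
  rw [chebW]
  linear_combination -C_product + (X + 2) * cassini

theorem chebQ_two_mul_add_one (m : ℕ) : chebQ R (2 * m + 1) = (X - 2) * chebW R m ^ 2 := by
  rw [chebQ_succ, ← C_sub_two_eq_mul_chebW_sq]
  norm_cast

theorem natDegree_chebW_le (n : ℕ) : (chebW R n).natDegree ≤ n := by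
  induction n using Nat.twoStepInduction with
  | zero => simp
  | one =>
    rw [Nat.cast_one, chebW_one]
    compute_degree
  | more n ih_n ih_succ =>
    push_cast at ih_succ ⊢
    rw [chebW_add_two]
    have natDegree_X_mul : (X * chebW R (n + 1)).natDegree ≤ n + 2 :=
      natDegree_mul_le.trans (by linarith [natDegree_X_le (R := R)])
    exact (natDegree_sub_le _ _).trans (max_le natDegree_X_mul (by lia))

theorem chebW_eval_two (n : ℤ) : (chebW R n).eval 2 = 2 * n + 1 := by
  rw [chebW, eval_add, Chebyshev.S_eval_two, Chebyshev.S_eval_two]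
  push_cast
  ring

variable {R}

theorem chebW_eval_add_mul_sub_one {z w : R} (hzw : z * w = 1) (n : ℕ) :
    (chebW R n).eval (z + w) * (z - 1) = z ^ (n + 1) - w ^ n := by
  induction n using Nat.twoStepInduction with
  | zero => simp
  | one =>
    simp only [Nat.cast_one, chebW_one, eval_add, eval_X, eval_one]
    linear_combination hzw
  | more n ih_n ih_succ =>
    push_cast at ih_succ ⊢
    rw [chebW_add_two, eval_sub, eval_mul, eval_X]
    linear_combination (z + w) * ih_succ - ih_n + (z ^ (n + 1) - w ^ n) * hzw

end CommRing

section Field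

variable {K : Type*} [Field K] {ζ : K}

theorem add_inv_eq_add_inv_iff {x y : K} (hx : x ≠ 0) (hy : y ≠ 0) :
    x + x⁻¹ = y + y⁻¹ ↔ x = y ∨ x * y = 1 := by
  have key : (x + x⁻¹ - (y + y⁻¹)) * (x * y) = (x - y) * (x * y - 1) := by
    field_simp
    ring
  rw [← sub_eq_zero, ← mul_left_inj' (mul_ne_zero hx hy), zero_mul, key, mul_eq_zero, sub_eq_zero,
    sub_eq_zero]

theorem injOn_pow_add_inv_pow {k : ℕ} (hζ : IsPrimitiveRoot ζ k) :
    Set.InjOn (fun j : ℕ ↦ ζ ^ j + ζ⁻¹ ^ j) (Set.Iic (k / 2)) := by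
  intro a ha b hb hab
  rw [Set.mem_Iic] at ha hb
  by_contra hne
  have ζ_ne_zero : ζ ≠ 0 := hζ.ne_zero (by lia)
  simp only [inv_pow] at hab
  rcases (add_inv_eq_add_inv_iff (pow_ne_zero a ζ_ne_zero) (pow_ne_zero b ζ_ne_zero)).1 hab with
    pow_eq | mul_eq_one
  · exact hne (hζ.pow_inj (by lia) (by lia) pow_eq)
  · rw [← pow_add] at mul_eq_one
    exact hζ.pow_ne_one_of_pos_of_lt (by lia) (by lia) mul_eq_one

theorem chebW_eval_pow_add_inv_pow {m j : ℕ} (hζ : IsPrimitiveRoot ζ (2 * m + 1))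
    (hj : ¬ 2 * m + 1 ∣ j) : (chebW K m).eval (ζ ^ j + ζ⁻¹ ^ j) = 0 := by
  have mul_eq_one : ζ ^ j * ζ⁻¹ ^ j = 1 := by
    rw [← mul_pow, mul_inv_cancel₀ (hζ.ne_zero (by lia)), one_pow]
  have pow_ne_one : ζ ^ j ≠ 1 := mt (hζ.dvd_of_pow_eq_one j) hj
  have pow_eq_one : (ζ ^ j) ^ (2 * m + 1) = 1 := by
    rw [pow_right_comm, hζ.pow_eq_one, one_pow]
  have pow_eq_inv_pow : (ζ ^ j) ^ (m + 1) = (ζ⁻¹ ^ j) ^ m := calc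
    (ζ ^ j) ^ (m + 1) = (ζ ^ j) ^ (m + 1) * (ζ ^ j * ζ⁻¹ ^ j) ^ m := by
      rw [mul_eq_one, one_pow, mul_one]
    _ = (ζ ^ j) ^ (2 * m + 1) * (ζ⁻¹ ^ j) ^ m := by ring
    _ = (ζ⁻¹ ^ j) ^ m := by rw [pow_eq_one, one_mul]
  have eval_mul_eq_zero := chebW_eval_add_mul_sub_one mul_eq_one m
  rw [pow_eq_inv_pow, sub_self] at eval_mul_eq_zero
  exact (mul_eq_zero.1 eval_mul_eq_zero).resolve_right (sub_ne_zero.2 pow_ne_one)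

theorem chebW_ne_zero {m : ℕ} (hm : ((2 * m + 1 : ℕ) : K) ≠ 0) : chebW K m ≠ 0 := by
  intro h
  have eval_two := chebW_eval_two K m
  rw [h, eval_zero] at eval_two
  exact hm (by exact_mod_cast eval_two.symm)

theorem chebW_roots {m : ℕ} [DecidableEq K] (hζ : IsPrimitiveRoot ζ (2 * m + 1)) :
    (chebW K m).roots = ((Finset.Icc 1 m).image fun j ↦ ζ ^ j + ζ⁻¹ ^ j).val := by
  refine roots_eq_of_natDegree_le_card_of_ne_zero ?_ ?_ (chebW_ne_zero hζ.neZero'.ne)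
  · simp only [Finset.forall_mem_image, Finset.mem_Icc]
    exact fun j hj ↦ chebW_eval_pow_add_inv_pow hζ (Nat.not_dvd_of_pos_of_lt hj.1 (by lia))
  · have injOn_Icc : Set.InjOn (fun j : ℕ ↦ ζ ^ j + ζ⁻¹ ^ j) (Finset.Icc 1 m) :=
      (injOn_pow_add_inv_pow hζ).mono fun j hj ↦ by
        rw [Finset.mem_coe, Finset.mem_Icc] at hj
        exact Set.mem_Iic.2 (by lia)
    rw [Finset.card_image_of_injOn injOn_Icc, Nat.card_Icc, Nat.add_sub_cancel]
    exact natDegree_chebW_le K m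

theorem chebQ_roots {m : ℕ} (hm : ((2 * m + 1 : ℕ) : K) ≠ 0) :
    (chebQ K (2 * m + 1)).roots = 2 ::ₘ 2 • (chebW K m).roots := by
  have Q_eq : chebQ K (2 * m + 1) = (X - C 2) * chebW K m ^ 2 := chebQ_two_mul_add_one K m
  rw [Q_eq, roots_mul (mul_ne_zero (X_sub_C_ne_zero 2) (pow_ne_zero 2 (chebW_ne_zero hm))),
    roots_X_sub_C, roots_pow, Multiset.singleton_add]

theorem stmt_5_general {ℓ : ℕ} (hodd : Odd ℓ) (hζ : IsPrimitiveRoot ζ ℓ) :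
    (∀ j₁ j₂ : ℕ, j₁ ≤ (ℓ - 1) / 2 → j₂ ≤ (ℓ - 1) / 2 → j₁ ≠ j₂ →
        ζ ^ j₁ + ζ⁻¹ ^ j₁ ≠ ζ ^ j₂ + ζ⁻¹ ^ j₂) ∧
    (chebQ K ℓ).rootMultiplicity 2 = 1 ∧
    (∀ j : ℕ, 1 ≤ j → j ≤ (ℓ - 1) / 2 →
        (chebQ K ℓ).rootMultiplicity (ζ ^ j + ζ⁻¹ ^ j) = 2) := by
  classical
  obtain ⟨m, rfl⟩ := hodd
  rw [show (2 * m + 1 - 1) / 2 = m by lia]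
  have distinct (a b : ℕ) (ha : a ≤ m) (hb : b ≤ m) (hab : a ≠ b) :
      ζ ^ a + ζ⁻¹ ^ a ≠ ζ ^ b + ζ⁻¹ ^ b :=
    (injOn_pow_add_inv_pow hζ).ne (Set.mem_Iic.2 (by lia)) (Set.mem_Iic.2 (by lia)) hab
  have ne_two (j : ℕ) (hj : 1 ≤ j) (hjm : j ≤ m) : ζ ^ j + ζ⁻¹ ^ j ≠ 2 := by
    simpa [one_add_one_eq_two] using distinct j 0 hjm (Nat.zero_le _) (by lia)
  refine ⟨distinct, ?_, fun j hj hjm ↦ ?_⟩ <;>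
    rw [← count_roots, chebQ_roots hζ.neZero'.ne, chebW_roots hζ]
  · rw [Multiset.count_cons_self, Multiset.count_nsmul, Multiset.count_eq_zero_of_notMem, mul_zero]
    simp only [Finset.mem_val, Finset.mem_image, Finset.mem_Icc, not_exists, not_and]
    exact fun j hj ↦ ne_two j hj.1 hj.2
  · rw [Multiset.count_cons_of_ne (ne_two j hj hjm), Multiset.count_nsmul,
      Multiset.count_eq_one_of_mem (Finset.nodup _), mul_one]
    rw [Finset.mem_val]
    exact Finset.mem_image_of_mem _ (Finset.mem_Icc.2 ⟨hj, hjm⟩)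

end Field

theorem stmt_5 (ℓ : ℕ) (hodd : Odd ℓ) (hℓ : 3 ≤ ℓ) (ζ : ℂ)
    (hζ : IsPrimitiveRoot ζ ℓ) :
    (∀ j₁ j₂ : ℕ, j₁ ≤ (ℓ - 1) / 2 → j₂ ≤ (ℓ - 1) / 2 → j₁ ≠ j₂ →
        ζ ^ j₁ + ζ⁻¹ ^ j₁ ≠ ζ ^ j₂ + ζ⁻¹ ^ j₂) ∧
    (chebQ ℂ ℓ).rootMultiplicity 2 = 1 ∧
    (∀ j : ℕ, 1 ≤ j → j ≤ (ℓ - 1) / 2 →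
        (chebQ ℂ ℓ).rootMultiplicity (ζ ^ j + ζ⁻¹ ^ j) = 2) :=
  stmt_5_general hodd hζ
end
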